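/- Let n ≥ 2, let E_1, …, E_n be Banach spaces over 𝕂 (= ℝ or ℂ), let A : E_1 × ⋯ × E_n → 𝕂 be a continuous n-linear form, and let A_{n−1} : E_1 × ⋯ × E_{n−1} → E_n' be the associated (n−1)-linear map defined by A_{n−1}(x^1,…,x^{n−1})(x^n) = A(x^1,…,x^n). If E_n' is a GT-space of cotype 2 and A_{n−1} is almost summing, then A is absolutely (1;2,…,2)-summing. -/

import Mathlib

open scoped BigOperators NNReal ENNReal

/-- The weak `ℓ_r` norm of a finite family `(x_j)` in a normed space:
`sup_{‖φ‖ ≤ 1} (∑_j ‖φ(x_j)‖^r)^(1/r)`. -/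
noncomputable def weakNorm (𝕜 : Type*) [RCLike 𝕜] {E : Type*} [NormedAddCommGroup E]
    [NormedSpace 𝕜 E] (r : ℝ) {m : ℕ} (x : Fin m → E) : ℝ :=
  ⨆ φ : {φ : E →L[𝕜] 𝕜 // ‖φ‖ ≤ 1}, (∑ j, ‖φ.1 (x j)‖ ^ r) ^ (1 / r)

/-- The Rademacher norm of a finite family `(x_j)_{j=1}^m` in a normed space:
`(2^{-m} ∑_{ε ∈ {-1,1}^m} ‖∑_j ε_j x_j‖²)^{1/2}`. -/
noncomputable def radNorm {E : Type*} [NormedAddCommGroup E] {m : ℕ} (x : Fin m → E) : ℝ :=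
  ((∑ ε : Fin m → Bool, ‖∑ j, (if ε j then x j else -x j)‖ ^ 2) / (2 : ℝ) ^ m) ^ ((1 : ℝ) / 2)

/-- A Banach space has cotype 2. -/
def HasCotype2 (X : Type*) [NormedAddCommGroup X] : Prop :=
  ∃ C > 0, ∀ (m : ℕ) (x : Fin m → X),
    (∑ j, ‖x j‖ ^ 2) ^ ((1 : ℝ) / 2) ≤ C * radNorm x

/-- A Banach space `X` is a GT-space: every bounded linear operator `X → ℓ₂` is absolutely
`1`-summing. -/
def IsGTSpace (𝕜 : Type*) [RCLike 𝕜] (X : Type*) [NormedAddCommGroup X]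
    [NormedSpace 𝕜 X] : Prop :=
  ∀ u : X →L[𝕜] lp (fun _ : ℕ => 𝕜) 2, ∃ C > 0, ∀ (m : ℕ) (x : Fin m → X),
    ∑ j, ‖u (x j)‖ ≤ C * weakNorm 𝕜 1 x

/-!
Put `X = E_n'` and let `y j ∈ X` be the values of `B` along the given families, so that the sum to
bound is `∑ j, ‖y j (z j)‖`. By cotype 2, the operator `v : ℓ₂^m → X` with `v (e j) = y j` is
2-summing with constant a multiple of `radNorm y`: Gaussian averages of `y` dominate the 2-summing
norm, and they are themselves dominated by Rademacher averages. For the latter domination, cut a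
Gaussian variable into the layers `{k < |g|}`, whose probabilities decay so fast that about `4 ^ k`
disjoint independent copies of the `k`-th layer fit into one probability space; cotype 2 then
bounds their total contribution by a single Rademacher average.

By Pietsch domination, `‖v w‖ ^ 2 ≤ κ * ψ (w ⊗ w)` for a functional `ψ` on operators with
`ψ 1 ≤ 1`. In an orthonormal basis `f` diagonalising `ψ`, all combinations `∑ i, θ i • v (f i)` with
`|θ i| ≤ 1` have norm at most `√κ`, so `v ∘ f` has weak `ℓ₁` norm at most `2 * √κ`. Since `X` is a
GT-space, the operator `x ↦ (x (z j))_j` from `X` to `ℓ₂` sums the norms along `v ∘ f`, and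
expanding `y` in `v ∘ f` and applying Cauchy–Schwarz finishes the proof.
-/

open MeasureTheory ProbabilityTheory Finset
open scoped RealInnerProductSpace

section Rademacher

variable {X : Type*} [NormedAddCommGroup X] {ι κ : Type*} [Fintype ι] [Fintype κ]

open scoped Classical in
/-- The mean square `𝔼 ‖∑ j, ε j • x j‖ ^ 2` of a family over independent uniform signs. Signs are
encoded as units of `ℤ`, so that changing the signs of the family is a translation. -/
noncomputable def radSq (x : ι → X) : ℝ := 𝔼 ε : ι → ℤˣ, ‖∑ j, ε j • x j‖ ^ 2

lemma radSq_nonneg (x : ι → X) : 0 ≤ radSq x :=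
  expect_nonneg fun _ _ => by positivity

lemma radSq_comp_equiv (e : κ ≃ ι) (x : ι → X) : radSq (x ∘ e) = radSq x := by
  classical
  refine Fintype.expect_equiv (e.arrowCongr (Equiv.refl ℤˣ)) _ _ fun ε => ?_
  rw [← e.sum_comp]
  simp

lemma radNorm_eq_sqrt_radSq {m : ℕ} (x : Fin m → X) : radNorm x = √(radSq x) := by
  classical
  let boolEquivSign : Bool ≃ ℤˣ :=
    ⟨fun b => if b then 1 else -1, fun u => u = 1, by decide, by decide⟩
  rw [radNorm, ← Real.sqrt_eq_rpow, radSq, expect_eq_sum_div_card]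
  congr 2
  · refine sum_equiv ((Equiv.refl _).arrowCongr boolEquivSign) (by simp) fun ε _ => ?_
    congr! 3 with j
    cases h : ε j <;> simp [boolEquivSign, h, Equiv.arrowCongr]
  · simp

lemma radNorm_nonneg {m : ℕ} (x : Fin m → X) : 0 ≤ radNorm x :=
  (radNorm_eq_sqrt_radSq x).symm ▸ Real.sqrt_nonneg _

lemma radNorm_sq {m : ℕ} (x : Fin m → X) : radNorm x ^ 2 = radSq x := by
  rw [radNorm_eq_sqrt_radSq, Real.sq_sqrt (radSq_nonneg x)]

lemma radSq_signs_smul (ε : ι → ℤˣ) (x : ι → X) : radSq (ε • x) = radSq x := by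
  classical
  refine Fintype.expect_equiv (Equiv.mulRight ε) _ _ fun δ => ?_
  simp [mul_smul]

lemma continuous_radSq : Continuous (radSq : (ι → X) → ℝ) := by
  unfold radSq
  simp only [Fintype.expect_eq_sum_div_card]
  fun_prop

lemma norm_sum_range_sq_le (K : ℕ) (a : ℕ → X) :
    ‖∑ k ∈ range K, a k‖ ^ 2 ≤ 2 * ∑ k ∈ range K, 2 ^ k * ‖a k‖ ^ 2 := by
  calc ‖∑ k ∈ range K, a k‖ ^ 2 ≤ (∑ k ∈ range K, ‖a k‖) ^ 2 := by
        gcongr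
        exact norm_sum_le _ _
    _ ≤ (∑ k ∈ range K, (1 / 2 : ℝ) ^ k) * ∑ k ∈ range K, 2 ^ k * ‖a k‖ ^ 2 :=
        sum_sq_le_sum_mul_sum_of_sq_le_mul _ (fun _ _ => by positivity)
          (fun _ _ => by positivity) fun k _ => by rw [← mul_assoc, ← mul_pow]; norm_num
    _ ≤ 2 * ∑ k ∈ range K, 2 ^ k * ‖a k‖ ^ 2 := by
        gcongr
        exact sum_geometric_two_le K

lemma radSq_sum_range_le (K : ℕ) (x : ℕ → ι → X) :
    radSq (∑ k ∈ range K, x k) ≤ 2 * ∑ k ∈ range K, 2 ^ k * radSq (x k) := by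
  classical
  simp only [radSq, mul_expect, ← expect_sum_comm]
  refine expect_le_expect fun ε _ => ?_
  simp only [Finset.sum_apply, smul_sum]
  rw [sum_comm]
  exact norm_sum_range_sq_le K _

/-- `X` has cotype 2 with squared constant `C`: the inequality of `HasCotype2` without the roots. -/
def HasCotype2With (C : ℝ) (X : Type*) [NormedAddCommGroup X] : Prop :=
  ∀ (m : ℕ) (x : Fin m → X), ∑ j, ‖x j‖ ^ 2 ≤ C * radSq x

lemma HasCotype2.exists_hasCotype2With (h : HasCotype2 X) : ∃ C > 0, HasCotype2With C X := by
  obtain ⟨C, hC, h⟩ := h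
  refine ⟨C ^ 2, by positivity, fun m x => ?_⟩
  have hx := h m x
  rw [← Real.sqrt_eq_rpow] at hx
  rw [← radNorm_sq, ← mul_pow]
  exact (Real.sqrt_le_left (mul_nonneg hC.le (radNorm_nonneg x))).1 hx

lemma HasCotype2With.sum_norm_sq_le {C : ℝ} (h : HasCotype2With C X) (x : ι → X) :
    ∑ j, ‖x j‖ ^ 2 ≤ C * radSq x := by
  rw [← radSq_comp_equiv (Fintype.equivFin ι).symm, ← (Fintype.equivFin ι).symm.sum_comp]
  exact h _ _

section Contraction

variable [NormedSpace ℝ X]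

lemma convexOn_radSq : ConvexOn ℝ Set.univ (radSq : (ι → X) → ℝ) := by
  classical
  have hconvex (ε : ι → ℤˣ) : ConvexOn ℝ Set.univ fun x : ι → X => ‖∑ j, ε j • x j‖ ^ 2 := by
    let signedSum : (ι → X) →ₗ[ℝ] X := ∑ j, ε j • LinearMap.proj j
    have := ((convexOn_univ_norm (E := X)).comp_linearMap signedSum).pow
      (fun _ _ => norm_nonneg _) 2
    simpa [signedSum, Function.comp_def, Pi.pow_def] using this
  refine ⟨convex_univ, fun x _ y _ a b ha hb hab => ?_⟩
  simp only [radSq, smul_eq_mul, mul_expect, ← expect_add_distrib]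
  exact expect_le_expect fun ε _ => (hconvex ε).2 (Set.mem_univ x) (Set.mem_univ y) ha hb hab

-- A point of the cube is a convex combination of its vertices, which are sign vectors.
lemma radSq_smul_le {t : ι → ℝ} (ht : ∀ j, |t j| ≤ 1) (x : ι → X) :
    radSq (t • x) ≤ radSq x := by
  have hmem : t ∈ convexHull ℝ (Set.univ.pi fun _ : ι => ({-1, 1} : Set ℝ)) := by
    rw [convexHull_pi]
    intro j _
    rw [convexHull_pair, segment_eq_Icc (by norm_num)]
    exact abs_le.1 (ht j)
  have hconvex : ConvexOn ℝ Set.univ fun s : ι → ℝ => radSq (s • x) := by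
    let smulFamily : (ι → ℝ) →ₗ[ℝ] ι → X :=
      LinearMap.pi fun j => (LinearMap.proj j).smulRight (x j)
    exact convexOn_radSq.comp_linearMap smulFamily
  obtain ⟨s, hs, hts⟩ := hconvex.exists_ge_of_mem_convexHull (Set.subset_univ _) hmem
  have hsign (j : ι) : ∃ ε : ℤˣ, s j • x j = ε • x j := by
    rcases hs j (Set.mem_univ j) with h | h
    · exact ⟨-1, by simp [h]⟩
    · exact ⟨1, by simp [Set.mem_singleton_iff.1 h]⟩
  choose ε hε using hsign
  rwa [show s • x = ε • x from funext hε, radSq_signs_smul] at hts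

lemma radSq_smul_mono {s t : ι → ℝ} (h : ∀ j, |s j| ≤ |t j|) (x : ι → X) :
    radSq (s • x) ≤ radSq (t • x) := by
  have hquot (j : ι) : |s j / t j| ≤ 1 := by
    rw [abs_div]
    exact div_le_one_of_le₀ (h j) (abs_nonneg _)
  convert radSq_smul_le hquot (t • x) using 2
  ext j
  have hzero : t j = 0 → s j = 0 := fun ht => abs_nonpos_iff.1 (by simpa [ht] using h j)
  simp only [Pi.smul_apply', smul_smul, div_mul_cancel_of_imp hzero]

/-- The families `t k • x` are averaged over a second set of signs `δ`: each combination
`∑ k, δ k • t k` is a contraction. -/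
lemma HasCotype2With.sum_radSq_smul_le {C : ℝ} (hC : 0 ≤ C) (h : HasCotype2With C X)
    {t : κ → ι → ℝ} (ht : ∀ j, ∑ k, |t k j| ≤ 1) (x : ι → X) :
    ∑ k, radSq (t k • x) ≤ C * radSq x := by
  classical
  have hcontr (δ : κ → ℤˣ) (j : ι) : |∑ k, δ k • t k j| ≤ 1 := by
    refine (abs_sum_le_sum_abs _ _).trans (le_of_eq_of_le (sum_congr rfl fun k _ => ?_) (ht j))
    rcases Int.units_eq_one_or (δ k) with h | h <;> simp [h]
  calc ∑ k, radSq (t k • x)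
      = 𝔼 ε : ι → ℤˣ, ∑ k, ‖∑ j, ε j • t k j • x j‖ ^ 2 := by
        rw [expect_sum_comm]; rfl
    _ ≤ 𝔼 ε : ι → ℤˣ, C * radSq fun k => ∑ j, ε j • t k j • x j :=
        expect_le_expect fun ε _ => h.sum_norm_sq_le _
    _ = C * 𝔼 δ : κ → ℤˣ, radSq ((fun j => ∑ k, δ k • t k j) • x) := by
        simp only [radSq, ← mul_expect]
        rw [expect_comm]
        congr! 6 with δ _ ε _
        simp only [Pi.smul_apply', smul_sum, sum_smul]
        rw [sum_comm]
        congr! 2 with j _ k _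
        rw [smul_assoc, smul_comm]
    _ ≤ C * radSq x := by
        gcongr
        exact expect_le univ_nonempty fun δ _ => radSq_smul_le (hcontr δ) x

end Contraction

end Rademacher

section Selection

variable {α β ι : Type*} [MeasurableSpace α] [MeasurableSpace β] [Fintype ι]
  {μ : Measure α} {ν : Measure β} [IsProbabilityMeasure μ] [IsProbabilityMeasure ν]

lemma map_indicator_one_congr {S : Set α} {T : Set β} (hS : MeasurableSet S)
    (hT : MeasurableSet T) (h : μ S = ν T) :
    μ.map (S.indicator (1 : α → ℝ)) = ν.map (T.indicator (1 : β → ℝ)) := by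
  ext U hU
  rw [Measure.map_apply (measurable_one.indicator hS) hU,
    Measure.map_apply (measurable_one.indicator hT) hU]
  by_cases h0 : (0 : ℝ) ∈ U <;> by_cases h1 : (1 : ℝ) ∈ U <;>
    simp [Set.indicator_preimage, Pi.one_def, Pi.zero_def, h0, h1, ← Set.compl_eq_univ_sdiff,
      prob_compl_eq_one_sub, hS, hT, h]

lemma lintegral_pi_comp_congr {γ : Type*} [MeasurableSpace γ] {f : α → γ} {g : β → γ}
    (hf : Measurable f) (hg : Measurable g) (h : μ.map f = ν.map g) {F : (ι → γ) → ℝ≥0∞}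
    (hF : Measurable F) :
    ∫⁻ ω, F (fun j => f (ω j)) ∂Measure.pi (fun _ : ι => μ) =
      ∫⁻ ω, F (fun j => g (ω j)) ∂Measure.pi (fun _ : ι => ν) := by
  have := Measure.isProbabilityMeasure_map (μ := μ) hf.aemeasurable
  have := Measure.isProbabilityMeasure_map (μ := ν) hg.aemeasurable
  rw [(measurePreserving_pi _ _ fun _ => ⟨hf, rfl⟩).lintegral_comp hF,
    (measurePreserving_pi _ _ fun _ => ⟨hg, rfl⟩).lintegral_comp hF, h]

/-- The law of a random colour: each of the first `N` colours has probability `p`, and the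
colour `Fin.last N` takes the remaining mass. -/
noncomputable def colourMeasure (N : ℕ) (p : ℝ≥0∞) : Measure (Fin (N + 1)) :=
  ∑ k : Fin N, p • Measure.dirac k.castSucc + (1 - N * p) • Measure.dirac (Fin.last N)

lemma isProbabilityMeasure_colourMeasure {N : ℕ} {p : ℝ≥0∞} (h : N * p ≤ 1) :
    IsProbabilityMeasure (colourMeasure N p) :=
  ⟨by simp [colourMeasure, h]⟩

lemma colourMeasure_singleton (N : ℕ) (p : ℝ≥0∞) (k : Fin N) :
    colourMeasure N p {k.castSucc} = p := by
  simp [colourMeasure, Set.indicator_apply, k.castSucc_ne_last.symm]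

variable {X : Type*} [NormedAddCommGroup X] [NormedSpace ℝ X]

lemma measurable_ofReal_radSq_smul (x : ι → X) :
    Measurable fun t : ι → ℝ => ENNReal.ofReal (radSq (t • x)) :=
  (ENNReal.continuous_ofReal.comp (continuous_radSq.comp (by fun_prop))).measurable

/-- Colour the indices independently, each of `N` colours having the probability of `S`. The
indices of one colour are then distributed like `{j | ω j ∈ S}`, and the colour classes are
disjoint. -/
lemma HasCotype2With.lintegral_radSq_indicator_smul_le {C : ℝ} (hC : 0 ≤ C)
    (h : HasCotype2With C X) {S : Set α} (hS : MeasurableSet S) {N : ℕ} (hN : N * μ S ≤ 1)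
    (x : ι → X) :
    N * ∫⁻ ω, ENNReal.ofReal (radSq ((fun j => S.indicator (1 : α → ℝ) (ω j)) • x))
      ∂Measure.pi (fun _ : ι => μ) ≤ ENNReal.ofReal (C * radSq x) := by
  have := isProbabilityMeasure_colourMeasure hN
  let selected (k : Fin N) (c : ι → Fin (N + 1)) (j : ι) : ℝ :=
    ({k.castSucc} : Set (Fin (N + 1))).indicator 1 (c j)
  have hdisjoint (c : ι → Fin (N + 1)) (j : ι) : ∑ k, |selected k c j| ≤ 1 := by
    have (k : Fin N) : |selected k c j| = if c j = k.castSucc then 1 else 0 := by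
      simp [selected, Set.indicator_apply, apply_ite abs]
    simp only [this, sum_boole]
    exact_mod_cast card_le_one.2 fun k hk l hl => Fin.castSucc_injective N <| by
      rw [← (mem_filter.1 hk).2, (mem_filter.1 hl).2]
  calc _ = ∑ k : Fin N, ∫⁻ c, ENNReal.ofReal (radSq (selected k c • x))
          ∂Measure.pi (fun _ : ι => colourMeasure N (μ S)) := by
        have hlaw (k : Fin N) := lintegral_pi_comp_congr (measurable_one.indicator hS)
          (measurable_one.indicator (.singleton k.castSucc)) (map_indicator_one_congr hS
            (.singleton _) (colourMeasure_singleton N (μ S) k).symm)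
          (measurable_ofReal_radSq_smul x)
        rw [← sum_congr rfl fun k _ => hlaw k]
        simp
    _ = ∫⁻ c, ENNReal.ofReal (∑ k : Fin N, radSq (selected k c • x))
          ∂Measure.pi (fun _ : ι => colourMeasure N (μ S)) := by
        rw [← lintegral_finsetSum _ fun _ _ => Measurable.of_discrete]
        simp only [ENNReal.ofReal_sum_of_nonneg fun _ _ => radSq_nonneg _]
    _ ≤ ∫⁻ _, ENNReal.ofReal (C * radSq x)
          ∂Measure.pi (fun _ : ι => colourMeasure N (μ S)) :=
        lintegral_mono fun c => ENNReal.ofReal_le_ofReal (h.sum_radSq_smul_le hC (hdisjoint c) x)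
    _ = ENNReal.ofReal (C * radSq x) := by simp

end Selection

section GaussianRademacher

variable {X : Type*} [NormedAddCommGroup X] [NormedSpace ℝ X] {ι : Type*} [Fintype ι]

lemma le_sum_range_indicator {a : ℝ} {K : ℕ} (h : |a| ≤ K) :
    |a| ≤ ∑ k ∈ range K, {b : ℝ | k < |b|}.indicator (1 : ℝ → ℝ) a := by
  calc |a| ≤ ⌈|a|⌉₊ := Nat.le_ceil _
    _ = ∑ _ ∈ range ⌈|a|⌉₊, (1 : ℝ) := by simp
    _ = ∑ k ∈ range ⌈|a|⌉₊, {b : ℝ | k < |b|}.indicator (1 : ℝ → ℝ) a :=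
        sum_congr rfl fun k hk =>
          (Set.indicator_of_mem (s := {b : ℝ | k < |b|}) (Nat.lt_ceil.1 (mem_range.1 hk)) 1).symm
    _ ≤ ∑ k ∈ range K, {b : ℝ | k < |b|}.indicator (1 : ℝ → ℝ) a :=
        sum_le_sum_of_subset_of_nonneg (range_subset_range.2 (Nat.ceil_le.2 h))
          fun _ _ _ => Set.indicator_nonneg (fun _ _ => zero_le_one) _

lemma ofReal_radSq_smul_le_tsum (g : ι → ℝ) (x : ι → X) :
    ENNReal.ofReal (radSq (g • x)) ≤ ∑' k : ℕ, ENNReal.ofReal (2 * 2 ^ k) *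
      ENNReal.ofReal (radSq ((fun j => {a : ℝ | k < |a|}.indicator (1 : ℝ → ℝ) (g j)) • x)) := by
  let layer (k : ℕ) (j : ι) : ℝ := {a : ℝ | k < |a|}.indicator 1 (g j)
  obtain ⟨K, hK⟩ := exists_nat_ge (∑ j, |g j|)
  have hlayer (j : ι) : |g j| ≤ |∑ k ∈ range K, layer k j| :=
    have hj : |g j| ≤ ∑ i, |g i| :=
      single_le_sum (f := fun i => |g i|) (fun _ _ => abs_nonneg _) (mem_univ j)
    (le_sum_range_indicator (hj.trans hK)).trans (le_abs_self _)
  calc ENNReal.ofReal (radSq (g • x))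
      ≤ ENNReal.ofReal (radSq (∑ k ∈ range K, layer k • x)) := by
        refine ENNReal.ofReal_le_ofReal ((radSq_smul_mono hlayer x).trans_eq ?_)
        congr 1
        ext j
        simp [sum_smul]
    _ ≤ ENNReal.ofReal (∑ k ∈ range K, 2 * 2 ^ k * radSq (layer k • x)) := by
        simp only [mul_assoc, ← mul_sum]
        exact ENNReal.ofReal_le_ofReal (radSq_sum_range_le K _)
    _ = ∑ k ∈ range K, ENNReal.ofReal (2 * 2 ^ k) * ENNReal.ofReal (radSq (layer k • x)) := by
        rw [ENNReal.ofReal_sum_of_nonneg fun _ _ => mul_nonneg (by positivity) (radSq_nonneg _)]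
        exact sum_congr rfl fun k _ => ENNReal.ofReal_mul (by positivity)
    _ ≤ _ := ENNReal.sum_le_tsum _

lemma ofReal_two_mul_two_pow_le (k : ℕ) :
    ENNReal.ofReal (2 * 2 ^ k) ≤ ENNReal.ofReal (32 * (1 / 2) ^ k) * (4 ^ (k - 2) : ℕ) := by
  rw [← ENNReal.ofReal_natCast, ← ENNReal.ofReal_mul (by positivity)]
  have h : (4 : ℝ) ^ k ≤ 16 * 4 ^ (k - 2) := by
    calc (4 : ℝ) ^ k ≤ 4 ^ (2 + (k - 2)) := pow_le_pow_right₀ (by norm_num) (by lia)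
      _ = 16 * 4 ^ (k - 2) := by rw [pow_add]; norm_num
  refine ENNReal.ofReal_le_ofReal ?_
  calc (2 : ℝ) * 2 ^ k = 2 * (1 / 2) ^ k * 4 ^ k := by rw [mul_assoc, ← mul_pow]; norm_num
    _ ≤ 2 * (1 / 2) ^ k * (16 * 4 ^ (k - 2)) := by gcongr
    _ = 32 * (1 / 2) ^ k * (4 ^ (k - 2) : ℕ) := by push_cast; ring

lemma HasCotype2With.lintegral_radSq_smul_le {C : ℝ} (hC : 0 ≤ C) (h : HasCotype2With C X)
    {μ : Measure ℝ} [IsProbabilityMeasure μ]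
    (hμ : ∀ k : ℕ, (4 ^ (k - 2) : ℕ) * μ {a | k < |a|} ≤ 1) (x : ι → X) :
    ∫⁻ g, ENNReal.ofReal (radSq (g • x)) ∂Measure.pi (fun _ : ι => μ) ≤
      ENNReal.ofReal (64 * C * radSq x) := by
  let layer (k : ℕ) (g : ι → ℝ) (j : ι) : ℝ := {a : ℝ | k < |a|}.indicator 1 (g j)
  have hS (k : ℕ) : MeasurableSet {a : ℝ | k < |a|} :=
    measurableSet_lt measurable_const measurable_norm
  have hlayer (k : ℕ) : Measurable fun g => ENNReal.ofReal (radSq (layer k g • x)) :=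
    (measurable_ofReal_radSq_smul x).comp <| measurable_pi_lambda _ fun j =>
      (measurable_one.indicator (hS k)).comp (measurable_pi_apply j)
  calc _ ≤ ∫⁻ g, ∑' k : ℕ, ENNReal.ofReal (2 * 2 ^ k) *
          ENNReal.ofReal (radSq (layer k g • x)) ∂Measure.pi (fun _ : ι => μ) :=
        lintegral_mono fun g => ofReal_radSq_smul_le_tsum g x
    _ = ∑' k : ℕ, ENNReal.ofReal (2 * 2 ^ k) *
          ∫⁻ g, ENNReal.ofReal (radSq (layer k g • x)) ∂Measure.pi (fun _ : ι => μ) := by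
        rw [lintegral_tsum fun k => ((hlayer k).const_mul _).aemeasurable]
        simp only [lintegral_const_mul _ (hlayer _)]
    _ ≤ ∑' k : ℕ, ENNReal.ofReal (32 * (1 / 2) ^ k) * ENNReal.ofReal (C * radSq x) := by
        refine ENNReal.tsum_le_tsum fun k =>
          (mul_le_mul_left (ofReal_two_mul_two_pow_le k) _).trans ?_
        rw [mul_assoc]
        gcongr
        exact h.lintegral_radSq_indicator_smul_le hC (hS k) (hμ k) x
    _ = ENNReal.ofReal (64 * C * radSq x) := by
        rw [ENNReal.tsum_mul_right, ← ENNReal.ofReal_tsum_of_nonneg (fun _ => by positivity)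
          (summable_geometric_two.mul_left _), tsum_mul_left, tsum_geometric_two,
          ← ENNReal.ofReal_mul (by norm_num)]
        congr 1
        ring

lemma lintegral_radSq_smul_eq {μ : Measure ℝ} [SigmaFinite μ]
    (hμ : MeasurePreserving (-· : ℝ → ℝ) μ μ) (x : ι → X) :
    ∫⁻ g, ENNReal.ofReal (radSq (g • x)) ∂Measure.pi (fun _ : ι => μ) =
      ∫⁻ g, ENNReal.ofReal (‖∑ j, g j • x j‖ ^ 2) ∂Measure.pi (fun _ : ι => μ) := by
  classical
  let F (g : ι → ℝ) : ℝ≥0∞ := ENNReal.ofReal (‖∑ j, g j • x j‖ ^ 2)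
  have hF : Measurable F := (ENNReal.continuous_ofReal.comp (by fun_prop)).measurable
  have hsign (ε : ℤˣ) : MeasurePreserving (fun a : ℝ => ε • a) μ μ := by
    rcases Int.units_eq_one_or ε with rfl | rfl
    · simpa using! MeasurePreserving.id μ
    · simpa using hμ
  have hsigns (ε : ι → ℤˣ) : MeasurePreserving (fun g : ι → ℝ => ε • g)
      (Measure.pi fun _ => μ) (Measure.pi fun _ => μ) :=
    measurePreserving_pi _ _ fun j => hsign (ε j)
  have hradSq (g : ι → ℝ) : ENNReal.ofReal (radSq (g • x)) =
      (∑ ε : ι → ℤˣ, F (ε • g)) / Fintype.card (ι → ℤˣ) := by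
    rw [← ENNReal.ofReal_sum_of_nonneg fun _ _ => by positivity, ← ENNReal.ofReal_natCast,
      ← ENNReal.ofReal_div_of_pos (by positivity), ← Fintype.expect_eq_sum_div_card]
    simp only [radSq, Pi.smul_apply', smul_assoc]
  calc _ = (∑ ε : ι → ℤˣ, ∫⁻ g, F (ε • g) ∂Measure.pi (fun _ : ι => μ)) /
          Fintype.card (ι → ℤˣ) := by
        simp only [hradSq, div_eq_mul_inv]
        rw [lintegral_mul_const' _ _ (by simp), lintegral_finsetSum]
        exact fun ε _ => hF.comp (hsigns ε).measurable
    _ = ∫⁻ g, F g ∂Measure.pi (fun _ : ι => μ) := by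
        simp only [(hsigns _).lintegral_comp hF, sum_const, card_univ, nsmul_eq_mul]
        rw [mul_comm, ENNReal.mul_div_cancel_right (by simp) (by simp)]

lemma gaussianReal_real_lt_abs_le (k : ℝ) :
    (gaussianReal 0 1).real {a | k < |a|} ≤ 2 * Real.exp (2 - 2 * k) := by
  have hpos : (gaussianReal 0 1).real {a | k ≤ a} ≤ Real.exp (2 - 2 * k) := by
    calc _ ≤ Real.exp (-2 * k) * mgf id (gaussianReal 0 1) 2 :=
          measure_ge_le_exp_mul_mgf k zero_le_two (integrable_exp_mul_gaussianReal 2)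
      _ = Real.exp (2 - 2 * k) := by
          rw [mgf_id_gaussianReal, ← Real.exp_add, NNReal.coe_one]
          ring_nf
  have hneg : (gaussianReal 0 1).real {a | a ≤ -k} ≤ Real.exp (2 - 2 * k) := by
    calc _ ≤ Real.exp (- -2 * -k) * mgf id (gaussianReal 0 1) (-2) :=
          measure_le_le_exp_mul_mgf (-k) (neg_nonpos.2 zero_le_two)
            (integrable_exp_mul_gaussianReal (-2))
      _ = Real.exp (2 - 2 * k) := by
          rw [mgf_id_gaussianReal, ← Real.exp_add, NNReal.coe_one]
          ring_nf
  have hunion : {a : ℝ | k < |a|} ⊆ {a | k ≤ a} ∪ {a | a ≤ -k} := by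
    rintro a (ha : k < |a|)
    rcases lt_abs.1 ha with h | h
    exacts [.inl h.le, .inr (le_neg.1 h.le : a ≤ -k)]
  calc _ ≤ _ := (measureReal_mono hunion).trans (measureReal_union_le _ _)
    _ ≤ _ := by linarith

lemma four_pow_mul_gaussianReal_lt_abs_le (k : ℕ) :
    (4 ^ (k - 2) : ℕ) * gaussianReal 0 1 {a : ℝ | k < |a|} ≤ 1 := by
  rcases lt_or_ge k 2 with hk | hk
  · simpa [Nat.sub_eq_zero_of_le hk.le] using prob_le_one
  obtain ⟨l, rfl⟩ := Nat.exists_eq_add_of_le' hk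
  have hfour : 4 ≤ Real.exp 2 := by
    have := Real.add_one_le_exp (1 : ℝ)
    calc (4 : ℝ) ≤ Real.exp 1 ^ 2 := by nlinarith
      _ = Real.exp 2 := by rw [← Real.exp_nat_mul]; norm_num
  have hreal : 4 ^ l * (gaussianReal 0 1).real {a : ℝ | (l + 2 : ℕ) < |a|} ≤ 1 := by
    calc _ ≤ Real.exp 2 ^ l * (2 * Real.exp (2 - 2 * (l + 2 : ℕ))) := by
          gcongr
          exact gaussianReal_real_lt_abs_le _
      _ = 2 * Real.exp (-2) := by
          rw [mul_left_comm, ← Real.exp_nat_mul, ← Real.exp_add]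
          push_cast
          ring_nf
      _ ≤ 1 := by
          rw [Real.exp_neg, ← div_eq_mul_inv, div_le_one (Real.exp_pos 2)]
          linarith
  rw [← ofReal_measureReal, ← ENNReal.ofReal_natCast, ← ENNReal.ofReal_mul (by positivity)]
  rw [ENNReal.ofReal_le_one]
  simpa only [Nat.add_sub_cancel, Nat.cast_pow, Nat.cast_ofNat] using hreal

end GaussianRademacher

section GaussianCotype

variable {X : Type*} [NormedAddCommGroup X] [NormedSpace ℝ X] {ι : Type*} [Fintype ι]

lemma measurePreserving_neg_gaussianReal (v : ℝ≥0) :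
    MeasurePreserving (-· : ℝ → ℝ) (gaussianReal 0 v) (gaussianReal 0 v) :=
  ⟨measurable_neg, by rw [gaussianReal_map_neg, neg_zero]⟩

lemma lintegral_sq_gaussianReal (v : ℝ≥0) :
    ∫⁻ a, ENNReal.ofReal (a ^ 2) ∂gaussianReal 0 v = v := by
  have hintegrable : Integrable (fun a : ℝ => a ^ 2) (gaussianReal 0 v) :=
    (memLp_id_gaussianReal 2).integrable_sq
  rw [← ofReal_integral_eq_lintegral_ofReal hintegrable (.of_forall fun _ => sq_nonneg _)]
  have := variance_fun_id_gaussianReal (μ := 0) (v := v)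
  rw [variance_eq_integral aemeasurable_id', integral_id_gaussianReal] at this
  simp only [sub_zero] at this
  rw [this, ENNReal.ofReal_coe_nnreal]

lemma HasCotype2With.lintegral_norm_sum_gaussian_le {C : ℝ} (hC : 0 ≤ C)
    (h : HasCotype2With C X) (x : ι → X) :
    ∫⁻ g, ENNReal.ofReal (‖∑ j, g j • x j‖ ^ 2) ∂Measure.pi (fun _ : ι => gaussianReal 0 1) ≤
      ENNReal.ofReal (64 * C * radSq x) := by
  rw [← lintegral_radSq_smul_eq (measurePreserving_neg_gaussianReal 1)]
  exact h.lintegral_radSq_smul_le hC four_pow_mul_gaussianReal_lt_abs_le x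

lemma HasCotype2With.sum_norm_sq_le_lintegral_gaussian {C : ℝ} (hC : 0 ≤ C)
    (h : HasCotype2With C X) (x : ι → X) :
    ENNReal.ofReal (∑ j, ‖x j‖ ^ 2) ≤ ENNReal.ofReal C *
      ∫⁻ g, ENNReal.ofReal (‖∑ j, g j • x j‖ ^ 2) ∂Measure.pi fun _ : ι => gaussianReal 0 1 := by
  have hcoord (j : ι) : ∫⁻ g, ENNReal.ofReal (g j ^ 2)
      ∂Measure.pi (fun _ : ι => gaussianReal 0 1) = 1 := by
    rw [(measurePreserving_eval (fun _ : ι => gaussianReal 0 1) j).lintegral_comp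
      (f := fun a => ENNReal.ofReal (a ^ 2)) (by fun_prop), lintegral_sq_gaussianReal,
      ENNReal.coe_one]
  calc ENNReal.ofReal (∑ j, ‖x j‖ ^ 2)
      = ∑ j, ENNReal.ofReal (‖x j‖ ^ 2) * ∫⁻ g, ENNReal.ofReal (g j ^ 2)
          ∂Measure.pi fun _ : ι => gaussianReal 0 1 := by
        simp only [hcoord, mul_one]
        exact ENNReal.ofReal_sum_of_nonneg fun _ _ => by positivity
    _ = ∫⁻ g, ∑ j, ENNReal.ofReal (‖x j‖ ^ 2) * ENNReal.ofReal (g j ^ 2)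
          ∂Measure.pi fun _ : ι => gaussianReal 0 1 := by
        rw [lintegral_finsetSum _ fun _ _ => by fun_prop]
        exact sum_congr rfl fun j _ => (lintegral_const_mul _ (by fun_prop)).symm
    _ ≤ ∫⁻ g, ENNReal.ofReal C * ENNReal.ofReal (radSq (g • x))
          ∂Measure.pi fun _ : ι => gaussianReal 0 1 := by
        refine lintegral_mono fun g => ?_
        simp only [← ENNReal.ofReal_mul (sq_nonneg _), ← ENNReal.ofReal_mul hC]
        rw [← ENNReal.ofReal_sum_of_nonneg fun _ _ => by positivity]
        refine ENNReal.ofReal_le_ofReal ((h.sum_norm_sq_le (g • x)).trans_eq' ?_)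
        exact sum_congr rfl fun j _ => by
          rw [Pi.smul_apply', norm_smul, mul_pow, Real.norm_eq_abs, sq_abs, mul_comm]
    _ = _ := by
        rw [lintegral_const_mul _ (measurable_ofReal_radSq_smul x),
          lintegral_radSq_smul_eq (measurePreserving_neg_gaussianReal 1)]

variable {H : Type*} [NormedAddCommGroup H] [InnerProductSpace ℝ H]

/-- The frame operator `w ↦ ∑ i, ⟪F i, w⟫ • F i` of a finite family in a Hilbert space. -/
noncomputable def frameOperator (F : ι → H) : H →L[ℝ] H :=
  ∑ i, InnerProductSpace.rankOne ℝ (F i) (F i)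

lemma inner_frameOperator_self (F : ι → H) (w : H) :
    ⟪frameOperator F w, w⟫ = ∑ i, ⟪F i, w⟫ ^ 2 := by
  simp [frameOperator, sum_inner, real_inner_smul_left, sq]

lemma isPositive_frameOperator (F : ι → H) : (frameOperator F).IsPositive :=
  ContinuousLinearMap.isPositive_sum _ fun _ _ => InnerProductSpace.isPositive_rankOne_self _

/-- An operator `v` on a Hilbert space `H` is 2-summing with squared constant `κ`. A finite family
`F` in `H` has weak 2-norm at most one exactly when `∑ i, ⟪F i, w⟫ ^ 2 ≤ ‖w‖ ^ 2` for all `w`. -/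
def IsTwoSummingWith (κ : ℝ) (v : H →L[ℝ] X) : Prop :=
  ∀ (m : ℕ) (F : Fin m → H), (∀ w, ∑ i, ⟪F i, w⟫ ^ 2 ≤ ‖w‖ ^ 2) → ∑ i, ‖v (F i)‖ ^ 2 ≤ κ

variable [FiniteDimensional ℝ H]

lemma map_pi_gaussianReal_eq_stdGaussian [MeasurableSpace H] [BorelSpace H] {F : ι → H}
    (hF : ∀ w, ∑ i, ⟪F i, w⟫ ^ 2 = ‖w‖ ^ 2) :
    (Measure.pi fun _ : ι => gaussianReal 0 1).map (fun g => ∑ i, g i • F i) =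
      stdGaussian H := by
  refine Measure.ext_of_charFun ?_
  ext w
  rw [charFun_apply, integral_map (Measurable.aemeasurable (by fun_prop)) (by fun_prop),
    charFun_stdGaussian]
  simp_rw [sum_inner, Complex.ofReal_sum, Finset.sum_mul, Complex.exp_sum, real_inner_smul_left]
  rw [integral_fintype_prod_eq_prod (f := fun i a => Complex.exp (↑(a * ⟪F i, w⟫) * Complex.I))]
  have hcoord (i : ι) : ∫ a, Complex.exp (↑(a * ⟪F i, w⟫) * Complex.I) ∂gaussianReal 0 1 =
      Complex.exp (-(⟪F i, w⟫ ^ 2 : ℝ) / 2) := by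
    have := charFun_gaussianReal (μ := 0) (v := 1) ⟪F i, w⟫
    rw [charFun_apply_real] at this
    simpa [mul_comm, neg_div] using this
  have hnorm : (‖w‖ : ℂ) ^ 2 = ∑ i, ((⟪F i, w⟫ ^ 2 : ℝ) : ℂ) := by
    rw [← Complex.ofReal_pow, ← hF, Complex.ofReal_sum]
  rw [prod_congr rfl fun i _ => hcoord i, ← Complex.exp_sum, ← sum_div, sum_neg_distrib, hnorm]

lemma exists_parseval_extension {F : ι → H} (hF : ∀ w, ∑ i, ⟪F i, w⟫ ^ 2 ≤ ‖w‖ ^ 2) :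
    ∃ (m : ℕ) (G : Fin m → H), ∀ w, ∑ i, ⟪Sum.elim F G i, w⟫ ^ 2 = ‖w‖ ^ 2 := by
  have hinner (w : H) : ⟪(1 - frameOperator F) w, w⟫ = ‖w‖ ^ 2 - ∑ i, ⟪F i, w⟫ ^ 2 := by
    rw [sub_apply, inner_sub_left, inner_frameOperator_self,
      one_apply_eq_self, real_inner_self_eq_norm_sq]
  have hpos : (1 - frameOperator F).IsPositive :=
    (ContinuousLinearMap.isPositive_iff _).2
      ⟨ContinuousLinearMap.isPositive_one.isSymmetric.sub (isPositive_frameOperator F).isSymmetric,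
        fun w => (hinner w).symm ▸ sub_nonneg.2 (hF w)⟩
  obtain ⟨m, G, hG⟩ := ContinuousLinearMap.isPositive_iff_eq_sum_rankOne.1 hpos
  refine ⟨m, G, fun w => ?_⟩
  have hGw : ∑ i, ⟪G i, w⟫ ^ 2 = ‖w‖ ^ 2 - ∑ i, ⟪F i, w⟫ ^ 2 := by
    rw [← inner_frameOperator_self, ← hinner, hG, frameOperator]
  simp [hGw]

lemma lintegral_norm_sq_map_pi [MeasurableSpace H] [BorelSpace H] (μ : Measure ℝ)
    (v : H →L[ℝ] X) (F : ι → H) :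
    ∫⁻ w, ENNReal.ofReal (‖v w‖ ^ 2)
        ∂(Measure.pi fun _ : ι => μ).map (fun g => ∑ i, g i • F i) =
      ∫⁻ g, ENNReal.ofReal (‖∑ i, g i • v (F i)‖ ^ 2) ∂Measure.pi fun _ : ι => μ := by
  have hmeas : Measurable fun w => ENNReal.ofReal (‖v w‖ ^ 2) :=
    (ENNReal.continuous_ofReal.comp (f := fun w => ‖v w‖ ^ 2) (by fun_prop)).measurable
  rw [lintegral_map hmeas (by fun_prop)]
  simp only [map_sum, map_smul]

lemma HasCotype2With.ofReal_sum_norm_sq_le_lintegral_stdGaussian [MeasurableSpace H]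
    [BorelSpace H] {C : ℝ} (hC : 0 ≤ C) (h : HasCotype2With C X) (v : H →L[ℝ] X) {F : ι → H}
    (hF : ∀ w, ∑ i, ⟪F i, w⟫ ^ 2 ≤ ‖w‖ ^ 2) :
    ENNReal.ofReal (∑ i, ‖v (F i)‖ ^ 2) ≤
      ENNReal.ofReal C * ∫⁻ w, ENNReal.ofReal (‖v w‖ ^ 2) ∂stdGaussian H := by
  obtain ⟨m, G, hG⟩ := exists_parseval_extension hF
  calc ENNReal.ofReal (∑ i, ‖v (F i)‖ ^ 2)
      ≤ ENNReal.ofReal (∑ i, ‖v (Sum.elim F G i)‖ ^ 2) := by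
        refine ENNReal.ofReal_le_ofReal ?_
        simp only [Fintype.sum_sum_type, Sum.elim_inl, Sum.elim_inr]
        exact le_add_of_nonneg_right (by positivity)
    _ ≤ _ := h.sum_norm_sq_le_lintegral_gaussian hC _
    _ = _ := by
        rw [← map_pi_gaussianReal_eq_stdGaussian hG, lintegral_norm_sq_map_pi]

lemma HasCotype2With.isTwoSummingWith {C : ℝ} (hC : 0 ≤ C) (h : HasCotype2With C X)
    (b : OrthonormalBasis ι ℝ H) (v : H →L[ℝ] X) :
    IsTwoSummingWith (64 * C ^ 2 * radSq (v ∘ b)) v := by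
  intro m F hF
  borelize H
  have hR := radSq_nonneg (v ∘ b)
  have hgauss : ∫⁻ w, ENNReal.ofReal (‖v w‖ ^ 2) ∂stdGaussian H ≤
      ENNReal.ofReal (64 * C * radSq (v ∘ b)) := by
    rw [stdGaussian_eq_map_pi_orthonormalBasis b, lintegral_norm_sq_map_pi]
    exact h.lintegral_norm_sum_gaussian_le hC (v ∘ b)
  refine (ENNReal.ofReal_le_ofReal_iff (by positivity)).1 ?_
  calc _ ≤ _ := h.ofReal_sum_norm_sq_le_lintegral_stdGaussian hC v hF
    _ ≤ ENNReal.ofReal C * ENNReal.ofReal (64 * C * radSq (v ∘ b)) := by gcongr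
    _ = _ := by
        rw [← ENNReal.ofReal_mul hC]
        ring_nf

end GaussianCotype

section Pietsch

variable {X : Type*} [NormedAddCommGroup X] [NormedSpace ℝ X]
  {H : Type*} [NormedAddCommGroup H] [InnerProductSpace ℝ H] {κ : ℝ} {v : H →L[ℝ] X}

lemma IsTwoSummingWith.sum_norm_sq_le {ι : Type*} [Fintype ι] (h : IsTwoSummingWith κ v)
    {F : ι → H} {c : ℝ} (hc : 0 ≤ c) (hF : ∀ w, ∑ i, ⟪F i, w⟫ ^ 2 ≤ c * ‖w‖ ^ 2) :
    ∑ i, ‖v (F i)‖ ^ 2 ≤ κ * c := by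
  rcases hc.eq_or_lt with rfl | hc
  · have hzero (i : ι) : F i = 0 := by
      have hle := (single_le_sum (fun j _ => sq_nonneg ⟪F j, F i⟫) (mem_univ i)).trans (hF (F i))
      rw [zero_mul] at hle
      exact inner_self_eq_zero.1 (pow_eq_zero_iff two_ne_zero |>.1 (hle.antisymm (sq_nonneg _)))
    simp [hzero]
  · let e := (Fintype.equivFin ι).symm
    have hsq : (√c)⁻¹ ^ 2 = c⁻¹ := by rw [inv_pow, Real.sq_sqrt hc.le]
    have hscaled := h _ (fun i => (√c)⁻¹ • F (e i)) fun w => by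
      simp only [real_inner_smul_left, mul_pow, hsq, ← mul_sum]
      rw [e.sum_comp fun i => ⟪F i, w⟫ ^ 2, inv_mul_le_iff₀ hc]
      exact hF w
    simp only [map_smul, norm_smul, mul_pow, ← mul_sum, norm_inv,
      Real.norm_of_nonneg (Real.sqrt_nonneg c), hsq] at hscaled
    rwa [e.sum_comp fun i => ‖v (F i)‖ ^ 2, inv_mul_le_iff₀ hc, mul_comm] at hscaled

lemma IsTwoSummingWith.norm_sq_le (h : IsTwoSummingWith κ v) (w : H) :
    ‖v w‖ ^ 2 ≤ κ * ‖w‖ ^ 2 := by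
  have hF (u : H) : ∑ _i : Unit, ⟪w, u⟫ ^ 2 ≤ ‖w‖ ^ 2 * ‖u‖ ^ 2 := by
    rw [Fintype.sum_unique, ← mul_pow, ← sq_abs]
    gcongr
    exact abs_real_inner_le_norm w u
  simpa using h.sum_norm_sq_le (sq_nonneg ‖w‖) hF

lemma IsTwoSummingWith.nonneg (h : IsTwoSummingWith κ v) : 0 ≤ κ := by
  simpa using h 0 ![] fun w => by simp

lemma IsTwoSummingWith.one_le_norm_sub_one [Nontrivial H] {ι : Type*} [Fintype ι]
    (h : IsTwoSummingWith κ v) (hκ : 0 < κ) (F : ι → H) :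
    1 ≤ ‖(∑ i, ‖v (F i)‖ ^ 2) • (1 : H →L[ℝ] H) - κ • frameOperator F - 1‖ := by
  set S := ∑ i, ‖v (F i)‖ ^ 2
  set T := S • (1 : H →L[ℝ] H) - κ • frameOperator F - 1
  by_contra! hT
  have hframe (w : H) : κ * ∑ i, ⟪F i, w⟫ ^ 2 ≤ (S - (1 - ‖T‖)) * ‖w‖ ^ 2 := by
    have hexpand : ⟪T w, w⟫ = S * ‖w‖ ^ 2 - κ * (∑ i, ⟪F i, w⟫ ^ 2) - ‖w‖ ^ 2 := by
      simp only [T, sub_apply, smul_apply, one_apply_eq_self, inner_sub_left,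
        real_inner_smul_left, real_inner_self_eq_norm_sq, inner_frameOperator_self]
    have hbound : -⟪T w, w⟫ ≤ ‖T‖ * ‖w‖ ^ 2 := by
      calc -⟪T w, w⟫ ≤ ‖T w‖ * ‖w‖ := neg_le.1 (abs_le.1 (abs_real_inner_le_norm _ _)).1
        _ ≤ ‖T‖ * ‖w‖ * ‖w‖ := by gcongr; exact T.le_opNorm w
        _ = ‖T‖ * ‖w‖ ^ 2 := by ring
    linarith
  have hS : 0 ≤ S - (1 - ‖T‖) := by
    obtain ⟨w, hw⟩ := exists_ne (0 : H)
    exact nonneg_of_mul_nonneg_left ((by positivity : 0 ≤ κ * ∑ i, ⟪F i, w⟫ ^ 2).trans (hframe w))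
      (by positivity)
  have hsum := h.sum_norm_sq_le (F := F) (div_nonneg hS hκ.le) fun w => by
    rw [div_mul_eq_mul_div, le_div_iff₀' hκ]
    exact hframe w
  rw [mul_div_cancel₀ _ hκ.ne'] at hsum
  linarith

lemma IsTwoSummingWith.disjoint_ball_convexHull [Nontrivial H] (h : IsTwoSummingWith κ v)
    (hκ : 0 < κ) :
    Disjoint (Metric.ball (1 : H →L[ℝ] H) 1) (convexHull ℝ (Set.range fun w : H =>
      ‖v w‖ ^ 2 • (1 : H →L[ℝ] H) - κ • InnerProductSpace.rankOne ℝ w w)) := by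
  rw [Set.disjoint_right]
  intro D hD
  obtain ⟨ι, _, c, z, hc, -, hz, rfl⟩ := mem_convexHull_iff_exists_fintype.1 hD
  choose w hw using hz
  rw [mem_ball_iff_norm, not_lt]
  refine (h.one_le_norm_sub_one hκ fun i => √(c i) • w i).trans_eq ?_
  congr 2
  simp only [frameOperator, ← hw, smul_sub, sum_sub_distrib, sum_smul, smul_sum, map_smul,
    norm_smul, mul_pow, smul_apply, Real.norm_of_nonneg (Real.sqrt_nonneg _),
    Real.sq_sqrt (hc _), smul_smul]
  congr 1
  refine sum_congr rfl fun i _ => ?_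
  rw [Real.mul_self_sqrt (hc i), mul_comm]

lemma nonneg_of_forall_le_sq_mul {u q : ℝ} (h : ∀ t : ℝ, u ≤ t ^ 2 * q) : 0 ≤ q := by
  by_contra! hq
  have hu : u ≤ 0 := by simpa using h 0
  have hle := h √(u / q + 1)
  rw [Real.sq_sqrt (by linarith [div_nonneg_of_nonpos hu hq.le]), add_mul, one_mul,
    div_mul_cancel₀ _ hq.ne] at hle
  linarith

lemma IsTwoSummingWith.exists_dominating_functional (h : IsTwoSummingWith κ v) :
    ∃ ψ : (H →L[ℝ] H) →L[ℝ] ℝ,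
      ψ 1 ≤ 1 ∧ ∀ w, ‖v w‖ ^ 2 ≤ κ * ψ (InnerProductSpace.rankOne ℝ w w) := by
  by_cases hv : v = 0
  · exact ⟨0, by simp [hv]⟩
  obtain ⟨w₀, hw₀⟩ : ∃ w, v w ≠ 0 := by
    contrapose! hv
    exact ContinuousLinearMap.ext hv
  have : Nontrivial H := ⟨w₀, 0, fun h0 => hw₀ (by rw [h0, map_zero])⟩
  have hκ : 0 < κ := h.nonneg.lt_of_ne' fun h0 => by
    have := h.norm_sq_le w₀
    rw [h0, zero_mul] at this
    exact hw₀ (norm_eq_zero.1 (pow_eq_zero_iff two_ne_zero |>.1 (this.antisymm (sq_nonneg _))))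
  obtain ⟨f, u, hball, hhull⟩ := geometric_hahn_banach_open (convex_ball (1 : H →L[ℝ] H) 1)
    Metric.isOpen_ball (convex_convexHull ℝ _) (h.disjoint_ball_convexHull hκ)
  have hle (w : H) : u ≤ ‖v w‖ ^ 2 * f 1 - κ * f (InnerProductSpace.rankOne ℝ w w) := by
    simpa using hhull _ (subset_convexHull ℝ _ ⟨w, rfl⟩)
  have hf : f 1 < 0 := (hball 1 (Metric.mem_ball_self one_pos)).trans_le (by simpa using hle 0)
  have hnonneg (w : H) : 0 ≤ ‖v w‖ ^ 2 * f 1 - κ * f (InnerProductSpace.rankOne ℝ w w) := by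
    refine nonneg_of_forall_le_sq_mul fun t => (hle (t • w)).trans_eq ?_
    simp only [map_smul, norm_smul, smul_apply, smul_eq_mul, mul_pow, Real.norm_eq_abs, sq_abs]
    ring
  refine ⟨(f 1)⁻¹ • f, by simp [hf.ne], fun w => ?_⟩
  rw [smul_apply, smul_eq_mul, mul_left_comm, ← div_eq_inv_mul, le_div_iff_of_neg hf]
  exact sub_nonneg.1 (hnonneg w)

variable [FiniteDimensional ℝ H]

lemma exists_orthonormalBasis_forall_ne_apply_eq_zero (B : H →ₗ[ℝ] H →ₗ[ℝ] ℝ)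
    (hB : ∀ x y, B x y = B y x) :
    ∃ f : OrthonormalBasis (Fin (Module.finrank ℝ H)) ℝ H, ∀ i j, i ≠ j → B (f i) (f j) = 0 := by
  let T : H →L[ℝ] H :=
    InnerProductSpace.continuousLinearMapOfBilin (𝕜 := ℝ) B.toContinuousBilinearMap
  have hT (x y : H) : ⟪T x, y⟫ = B x y :=
    InnerProductSpace.continuousLinearMapOfBilin_apply B.toContinuousBilinearMap x y
  have hsymm : T.toLinearMap.IsSymmetric := fun x y =>
    (hT x y).trans ((hB x y).trans ((hT y x).symm.trans (real_inner_comm x (T y))))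
  refine ⟨hsymm.eigenvectorBasis rfl, fun i j hij => ?_⟩
  have heigen := hsymm.apply_eigenvectorBasis rfl i
  rw [← hT, ← ContinuousLinearMap.coe_coe, heigen, inner_smul_left,
    (hsymm.eigenvectorBasis rfl).inner_eq_zero hij, mul_zero]

lemma exists_orthonormalBasis_map_rankOne_sum_eq (ψ : (H →L[ℝ] H) →L[ℝ] ℝ) :
    ∃ f : OrthonormalBasis (Fin (Module.finrank ℝ H)) ℝ H, ∀ θ : Fin (Module.finrank ℝ H) → ℝ,
      ψ (InnerProductSpace.rankOne ℝ (∑ i, θ i • f i) (∑ i, θ i • f i)) =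
        ∑ i, θ i ^ 2 * ψ (InnerProductSpace.rankOne ℝ (f i) (f i)) := by
  let B : H →ₗ[ℝ] H →ₗ[ℝ] ℝ := LinearMap.mk₂ ℝ
    (fun x y => ψ (InnerProductSpace.rankOne ℝ x y) + ψ (InnerProductSpace.rankOne ℝ y x))
    (fun x y z => by simp only [map_add, add_apply]; ring)
    (fun a x y => by simp [mul_add])
    (fun x y z => by simp only [map_add, add_apply]; ring)
    (fun a x y => by simp [mul_add])
  have hdiag (x : H) : B x x = 2 * ψ (InnerProductSpace.rankOne ℝ x x) := (two_mul _).symm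
  obtain ⟨f, hf⟩ := exists_orthonormalBasis_forall_ne_apply_eq_zero B fun x y => add_comm _ _
  refine ⟨f, fun θ => mul_left_cancel₀ two_ne_zero ?_⟩
  rw [← hdiag, map_sum, mul_sum]
  refine sum_congr rfl fun i _ => ?_
  rw [map_sum, LinearMap.sum_apply,
    sum_eq_single i (fun j _ hji => by simp [hf j i hji]) (by simp)]
  simp only [map_smul, LinearMap.smul_apply, smul_eq_mul, hdiag]
  ring

lemma IsTwoSummingWith.exists_orthonormalBasis (h : IsTwoSummingWith κ v) :
    ∃ f : OrthonormalBasis (Fin (Module.finrank ℝ H)) ℝ H,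
      ∀ θ : Fin (Module.finrank ℝ H) → ℝ, (∀ i, |θ i| ≤ 1) → ‖∑ i, θ i • v (f i)‖ ^ 2 ≤ κ := by
  obtain ⟨ψ, hψ, hv⟩ := h.exists_dominating_functional
  obtain ⟨f, hf⟩ := exists_orthonormalBasis_map_rankOne_sum_eq ψ
  refine ⟨f, fun θ hθ => ?_⟩
  calc ‖∑ i, θ i • v (f i)‖ ^ 2
      = ‖v (∑ i, θ i • f i)‖ ^ 2 := by simp only [map_sum, map_smul]
    _ ≤ κ * ∑ i, θ i ^ 2 * ψ (InnerProductSpace.rankOne ℝ (f i) (f i)) := hf θ ▸ hv _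
    _ = ∑ i, θ i ^ 2 * (κ * ψ (InnerProductSpace.rankOne ℝ (f i) (f i))) := by
        simp only [mul_sum, mul_left_comm]
    _ ≤ ∑ i, κ * ψ (InnerProductSpace.rankOne ℝ (f i) (f i)) :=
        sum_le_sum fun i _ => mul_le_of_le_one_left ((sq_nonneg _).trans (hv _))
          ((sq_le_one_iff_abs_le_one _).2 (hθ i))
    _ = κ * ψ 1 := by
        rw [← mul_sum, ← map_sum, f.sum_rankOne_eq_id, ContinuousLinearMap.one_def]
    _ ≤ κ := mul_le_of_le_one_right h.nonneg hψ

end Pietsch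

section WeakNorm

variable {𝕜 : Type*} [RCLike 𝕜] {X : Type*} [NormedAddCommGroup X] [NormedSpace 𝕜 X] {m : ℕ}

lemma weakNorm_nonneg (r : ℝ) (x : Fin m → X) : 0 ≤ weakNorm 𝕜 r x :=
  Real.iSup_nonneg fun _ => by positivity

lemma rpow_sum_norm_apply_le_weakNorm {r : ℝ} (hr : 0 < r) (x : Fin m → X) {φ : X →L[𝕜] 𝕜}
    (hφ : ‖φ‖ ≤ 1) : (∑ j, ‖φ (x j)‖ ^ r) ^ (1 / r) ≤ weakNorm 𝕜 r x := by
  refine le_ciSup (f := fun φ : {φ : X →L[𝕜] 𝕜 // ‖φ‖ ≤ 1} => (∑ j, ‖φ.1 (x j)‖ ^ r) ^ (1 / r))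
    ⟨(∑ j, ‖x j‖ ^ r) ^ (1 / r), ?_⟩ ⟨φ, hφ⟩
  rintro _ ⟨ψ, rfl⟩
  dsimp only
  gcongr with j
  exact ψ.1.le_of_opNorm_le_of_le ψ.2 le_rfl |>.trans_eq (one_mul _)

lemma sum_norm_apply_le_weakNorm_one (x : Fin m → X) {φ : X →L[𝕜] 𝕜} (hφ : ‖φ‖ ≤ 1) :
    ∑ j, ‖φ (x j)‖ ≤ weakNorm 𝕜 1 x := by
  simpa using rpow_sum_norm_apply_le_weakNorm one_pos x hφ

lemma weakNorm_one_le {x : Fin m → X} {L : ℝ}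
    (h : ∀ φ : X →L[𝕜] 𝕜, ‖φ‖ ≤ 1 → ∑ j, ‖φ (x j)‖ ≤ L) : weakNorm 𝕜 1 x ≤ L := by
  have : Nonempty {φ : X →L[𝕜] 𝕜 // ‖φ‖ ≤ 1} := ⟨⟨0, by simp⟩⟩
  exact ciSup_le fun φ => by simpa using h φ.1 φ.2

lemma weakNorm_one_smul_le (c : 𝕜) (x : Fin m → X) :
    weakNorm 𝕜 1 (c • x) ≤ ‖c‖ * weakNorm 𝕜 1 x :=
  weakNorm_one_le fun φ hφ => by
    simp only [Pi.smul_apply, map_smul, norm_smul, ← mul_sum]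
    gcongr
    exact sum_norm_apply_le_weakNorm_one x hφ

lemma sum_norm_apply_sq_le_weakNorm_two (x : Fin m → X) (φ : X →L[𝕜] 𝕜) :
    ∑ j, ‖φ (x j)‖ ^ 2 ≤ (weakNorm 𝕜 2 x * ‖φ‖) ^ 2 := by
  rcases eq_or_ne φ 0 with rfl | hφ
  · simp
  have hφ : 0 < ‖φ‖ := norm_pos_iff.2 hφ
  have hunit : ‖((‖φ‖⁻¹ : ℝ) : 𝕜) • φ‖ ≤ 1 := by
    rw [norm_smul, RCLike.norm_ofReal, abs_of_pos (inv_pos.2 hφ), inv_mul_cancel₀ hφ.ne']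
  have hle := rpow_sum_norm_apply_le_weakNorm two_pos x hunit
  rw [← Real.sqrt_eq_rpow, Real.sqrt_le_left (weakNorm_nonneg _ _)] at hle
  simp only [smul_apply, norm_smul, RCLike.norm_ofReal, abs_of_pos (inv_pos.2 hφ),
    Real.rpow_two, mul_pow, ← mul_sum, inv_pow] at hle
  rwa [inv_mul_le_iff₀ (by positivity), mul_comm, ← mul_pow] at hle

lemma norm_le_abs_re_add_abs_im (a : 𝕜) : ‖a‖ ≤ |RCLike.re a| + |RCLike.im a| := by
  refine abs_le_of_sq_le_sq' ?_ (by positivity) |>.2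
  rw [RCLike.norm_sq_eq_def, add_sq, sq_abs, sq_abs]
  nlinarith [abs_nonneg (RCLike.re a), abs_nonneg (RCLike.im a)]

section RealScalars

variable [NormedSpace ℝ X]

lemma sum_abs_apply_le_of_norm_sum_smul_le {ι : Type*} [Fintype ι] {x : ι → X} {L : ℝ}
    (hx : ∀ θ : ι → ℝ, (∀ i, |θ i| ≤ 1) → ‖∑ i, θ i • x i‖ ≤ L) {g : X →L[ℝ] ℝ}
    (hg : ‖g‖ ≤ 1) : ∑ i, |g (x i)| ≤ L := by
  have hsign (a : ℝ) : |(SignType.sign a : ℝ)| ≤ 1 := by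
    rcases lt_trichotomy a 0 with h | rfl | h <;> simp [*]
  calc ∑ i, |g (x i)| = g (∑ i, (SignType.sign (g (x i)) : ℝ) • x i) := by
        simp only [map_sum, map_smul, smul_eq_mul, sign_mul_self]
    _ ≤ ‖g (∑ i, (SignType.sign (g (x i)) : ℝ) • x i)‖ := le_abs_self _
    _ ≤ 1 * L := g.le_of_opNorm_le_of_le hg (hx _ fun i => hsign _)
    _ = L := one_mul L

lemma weakNorm_one_le_of_norm_sum_smul_le [IsScalarTower ℝ 𝕜 X] {x : Fin m → X} {L : ℝ}
    (hx : ∀ θ : Fin m → ℝ, (∀ i, |θ i| ≤ 1) → ‖∑ i, θ i • x i‖ ≤ L) :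
    weakNorm 𝕜 1 x ≤ 2 * L := by
  refine weakNorm_one_le fun φ hφ => ?_
  have hpart {p : 𝕜 →L[ℝ] ℝ} (hp : ∀ a, ‖p a‖ ≤ ‖a‖) : ∑ i, |p (φ (x i))| ≤ L :=
    sum_abs_apply_le_of_norm_sum_smul_le hx (g := p.comp (φ.restrictScalars ℝ)) <|
      ContinuousLinearMap.opNorm_le_bound _ zero_le_one fun w =>
        (hp _).trans (φ.le_of_opNorm_le hφ w)
  calc ∑ i, ‖φ (x i)‖ ≤ ∑ i, (|RCLike.re (φ (x i))| + |RCLike.im (φ (x i))|) := by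
        gcongr
        exact norm_le_abs_re_add_abs_im _
    _ ≤ L + L := by
        rw [sum_add_distrib]
        exact add_le_add (hpart (p := RCLike.reCLM) RCLike.abs_re_le_norm)
          (hpart (p := RCLike.imCLM) RCLike.abs_im_le_norm)
    _ = 2 * L := (two_mul L).symm

lemma HasCotype2With.exists_orthonormalBasis_weakNorm_le [IsScalarTower ℝ 𝕜 X] {C : ℝ}
    (hC : 0 ≤ C) (h : HasCotype2With C X) {H : Type*} [NormedAddCommGroup H]
    [InnerProductSpace ℝ H] [FiniteDimensional ℝ H] (b : OrthonormalBasis (Fin m) ℝ H)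
    (v : H →L[ℝ] X) :
    ∃ f : OrthonormalBasis (Fin (Module.finrank ℝ H)) ℝ H,
      weakNorm 𝕜 1 (v ∘ f) ≤ 16 * C * radNorm (v ∘ b) := by
  obtain ⟨f, hf⟩ := (h.isTwoSummingWith hC b v).exists_orthonormalBasis
  have hrad := radNorm_nonneg (v ∘ b)
  refine ⟨f, (weakNorm_one_le_of_norm_sum_smul_le (L := 8 * C * radNorm (v ∘ b)) fun θ hθ =>
    abs_le_of_sq_le_sq' ?_ (by positivity) |>.2).trans_eq (by ring)⟩
  refine (hf θ hθ).trans_eq ?_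
  rw [← radNorm_sq]
  ring

end RealScalars

end WeakNorm

section GrothendieckSpaces

variable {𝕜 : Type*} [RCLike 𝕜]

section UniformConstant

variable {X : Type*} [NormedAddCommGroup X] [NormedSpace 𝕜 X]

lemma IsGTSpace.exists_sum_norm_le_of_weakNorm_le_one (h : IsGTSpace 𝕜 X) :
    ∃ C > 0, ∀ (u : X →L[𝕜] lp (fun _ : ℕ => 𝕜) 2) (m : ℕ) (x : Fin m → X),
      weakNorm 𝕜 1 x ≤ 1 → ∑ j, ‖u (x j)‖ ≤ C * ‖u‖ := by
  let ℓ₂ := lp (fun _ : ℕ => 𝕜) 2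
  let J := {p : Σ m : ℕ, (Fin m → X) × (Fin m → ℓ₂ →L[𝕜] 𝕜) //
    weakNorm 𝕜 1 p.2.1 ≤ 1 ∧ ∀ i, ‖p.2.2 i‖ ≤ 1}
  let g (p : J) : (X →L[𝕜] ℓ₂) →L[𝕜] 𝕜 :=
    ∑ i, (p.1.2.2 i).comp (ContinuousLinearMap.apply 𝕜 ℓ₂ (p.1.2.1 i))
  have hg (p : J) (u : X →L[𝕜] ℓ₂) : g p u = ∑ i, p.1.2.2 i (u (p.1.2.1 i)) := by simp [g]
  obtain ⟨C, hC⟩ : ∃ C, ∀ p, ‖g p‖ ≤ C := by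
    refine banach_steinhaus fun u => ?_
    obtain ⟨C, hC0, hC⟩ := h u
    refine ⟨C, fun ⟨⟨m, x, φ⟩, hx, hφ⟩ => ?_⟩
    calc ‖g ⟨⟨m, x, φ⟩, hx, hφ⟩ u‖ ≤ ∑ i, ‖φ i (u (x i))‖ := by
          rw [hg]
          exact norm_sum_le _ _
      _ ≤ ∑ i, ‖u (x i)‖ :=
          sum_le_sum fun i _ => ((φ i).le_of_opNorm_le (hφ i) _).trans_eq (one_mul _)
      _ ≤ C * weakNorm 𝕜 1 x := hC m x
      _ ≤ C := mul_le_of_le_one_right hC0.le hx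
  refine ⟨max C 1, by positivity, fun u m x hx => ?_⟩
  choose φ hφ hφu using fun i => exists_dual_vector'' 𝕜 (u (x i))
  have hgu : g ⟨⟨m, x, φ⟩, hx, hφ⟩ u = ((∑ i, ‖u (x i)‖ : ℝ) : 𝕜) := by
    rw [hg, RCLike.ofReal_sum]
    exact sum_congr rfl fun i _ => hφu i
  calc ∑ i, ‖u (x i)‖ = ‖g ⟨⟨m, x, φ⟩, hx, hφ⟩ u‖ := by
        rw [hgu, RCLike.norm_ofReal, abs_of_nonneg (by positivity)]
    _ ≤ max C 1 * ‖u‖ :=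
        (g _).le_of_opNorm_le ((hC _).trans (le_max_left _ _)) u

lemma IsGTSpace.exists_sum_norm_le (h : IsGTSpace 𝕜 X) :
    ∃ C > 0, ∀ (u : X →L[𝕜] lp (fun _ : ℕ => 𝕜) 2) (m : ℕ) (x : Fin m → X),
      ∑ j, ‖u (x j)‖ ≤ C * ‖u‖ * weakNorm 𝕜 1 x := by
  obtain ⟨C, hC0, hC⟩ := h.exists_sum_norm_le_of_weakNorm_le_one
  refine ⟨C, hC0, fun u m x => ?_⟩
  rcases (weakNorm_nonneg (𝕜 := 𝕜) 1 x).eq_or_lt with hx | hx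
  · obtain ⟨D, -, hD⟩ := h u
    simpa [← hx] using hD m x
  let c : 𝕜 := RCLike.ofReal (weakNorm 𝕜 1 x)⁻¹
  have hc : ‖c‖ = (weakNorm 𝕜 1 x)⁻¹ := by
    rw [RCLike.norm_ofReal, abs_of_pos (inv_pos.2 hx)]
  have hscaled := hC u m (c • x) <| (weakNorm_one_smul_le c x).trans_eq <| by
    rw [hc, inv_mul_cancel₀ hx.ne']
  simp only [Pi.smul_apply, map_smul, norm_smul, hc, ← mul_sum] at hscaled
  rwa [inv_mul_le_iff₀ hx, mul_comm] at hscaled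

end UniformConstant

variable {E : Type*} [NormedAddCommGroup E] [NormedSpace 𝕜 E]

lemma exists_evaluationOperator {m : ℕ} (z : Fin m → E) :
    ∃ u : (E →L[𝕜] 𝕜) →L[𝕜] lp (fun _ : ℕ => 𝕜) 2,
      (∀ x, ‖u x‖ ^ 2 = ∑ j, ‖x (z j)‖ ^ 2) ∧ ‖u‖ ≤ weakNorm 𝕜 2 z := by
  let u : (E →L[𝕜] 𝕜) →L[𝕜] lp (fun _ : ℕ => 𝕜) 2 := ∑ j : Fin m,
    (lp.singleContinuousLinearMap 𝕜 (fun _ : ℕ => 𝕜) 2 j).comp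
      (ContinuousLinearMap.apply 𝕜 𝕜 (z j))
  have hu (x : E →L[𝕜] 𝕜) : ‖u x‖ ^ 2 = ∑ j, ‖x (z j)‖ ^ 2 := by
    let a (k : ℕ) : 𝕜 := if hk : k < m then x (z ⟨k, hk⟩) else 0
    have ha (j : Fin m) : a j = x (z j) := dif_pos j.2
    have hsingle := lp.norm_sum_single (E := fun _ : ℕ => 𝕜) (p := 2) (by norm_num) a (range m)
    simpa [sum_range, ha, u] using hsingle
  refine ⟨u, hu, ContinuousLinearMap.opNorm_le_bound _ (weakNorm_nonneg _ _) fun x => ?_⟩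
  refine abs_le_of_sq_le_sq' ?_ (mul_nonneg (weakNorm_nonneg _ _) (norm_nonneg _)) |>.2
  exact (hu x).trans_le (sum_norm_apply_sq_le_weakNorm_two z x)

lemma sum_norm_apply_le_sum_sqrt {ι ι' H : Type*} [Fintype ι] [Fintype ι'] [NormedAddCommGroup H]
    [InnerProductSpace ℝ H] (b : OrthonormalBasis ι ℝ H) (f : OrthonormalBasis ι' ℝ H)
    (v : H →L[ℝ] E →L[𝕜] 𝕜) (z : ι → E) :
    ∑ j, ‖v (b j) (z j)‖ ≤ ∑ i, √(∑ j, ‖v (f i) (z j)‖ ^ 2) := by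
  have hexpand (j : ι) : v (b j) (z j) = ∑ i, ⟪f i, b j⟫ • v (f i) (z j) := by
    conv_lhs => rw [← f.sum_repr' (b j)]
    simp only [map_sum, map_smul, _root_.sum_apply, smul_apply]
  have hcauchy (i : ι') :
      ∑ j, |⟪f i, b j⟫| * ‖v (f i) (z j)‖ ≤ √(∑ j, ‖v (f i) (z j)‖ ^ 2) := by
    refine (Real.sum_mul_le_sqrt_mul_sqrt _ _ _).trans_eq ?_
    have hunit : ∑ j, |⟪f i, b j⟫| ^ 2 = 1 := by
      simpa using b.sum_sq_norm_inner_left (f i)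
    rw [hunit, Real.sqrt_one, one_mul]
  calc ∑ j, ‖v (b j) (z j)‖ ≤ ∑ j, ∑ i, |⟪f i, b j⟫| * ‖v (f i) (z j)‖ := by
        refine sum_le_sum fun j _ => hexpand j ▸ (norm_sum_le _ _).trans_eq ?_
        simp only [norm_smul, Real.norm_eq_abs]
    _ = ∑ i, ∑ j, |⟪f i, b j⟫| * ‖v (f i) (z j)‖ := sum_comm
    _ ≤ _ := sum_le_sum fun i _ => hcauchy i

lemma exists_sum_norm_apply_le (hGT : IsGTSpace 𝕜 (E →L[𝕜] 𝕜)) (hcot : HasCotype2 (E →L[𝕜] 𝕜)) :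
    ∃ K > 0, ∀ (m : ℕ) (y : Fin m → E →L[𝕜] 𝕜) (z : Fin m → E),
      ∑ j, ‖y j (z j)‖ ≤ K * radNorm y * weakNorm 𝕜 2 z := by
  obtain ⟨C, hC0, hC⟩ := hcot.exists_hasCotype2With
  obtain ⟨G, hG0, hG⟩ := hGT.exists_sum_norm_le
  refine ⟨G * (16 * C), by positivity, fun m y z => ?_⟩
  let b := EuclideanSpace.basisFun (Fin m) ℝ
  let v : EuclideanSpace ℝ (Fin m) →L[ℝ] E →L[𝕜] 𝕜 := (b.toBasis.constr ℝ y).toContinuousLinearMap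
  have hv (j : Fin m) : v (b j) = y j := by
    rw [← b.coe_toBasis]
    exact b.toBasis.constr_basis ℝ y j
  obtain ⟨f, hf⟩ := hC.exists_orthonormalBasis_weakNorm_le (𝕜 := 𝕜) hC0.le b v
  obtain ⟨u, hu, hu_norm⟩ := exists_evaluationOperator (𝕜 := 𝕜) z
  calc ∑ j, ‖y j (z j)‖ ≤ ∑ i, √(∑ j, ‖v (f i) (z j)‖ ^ 2) := by
        simpa only [hv] using sum_norm_apply_le_sum_sqrt b f v z
    _ = ∑ i, ‖u (v (f i))‖ := by simp only [← hu, Real.sqrt_sq (norm_nonneg _)]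
    _ ≤ G * ‖u‖ * weakNorm 𝕜 1 (v ∘ f) := hG u _ (v ∘ f)
    _ ≤ G * weakNorm 𝕜 2 z * (16 * C * radNorm (v ∘ b)) := by
        have hz := weakNorm_nonneg (𝕜 := 𝕜) 2 z
        have hvf := weakNorm_nonneg (𝕜 := 𝕜) 1 (v ∘ f)
        gcongr
    _ = G * (16 * C) * radNorm y * weakNorm 𝕜 2 z := by
        rw [show v ∘ b = y from funext hv]
        ring

end GrothendieckSpaces

theorem almost_summing_implies_summing_general {𝕜 : Type*} [RCLike 𝕜] {n : ℕ}
    (E : Fin (n + 1) → Type*) [∀ i, NormedAddCommGroup (E i)] [∀ i, NormedSpace 𝕜 (E i)]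
    (A : (∀ i, E i) → 𝕜) (B : (∀ i : Fin n, E i.castSucc) → E (Fin.last n) →L[𝕜] 𝕜)
    (hAB : ∀ (v : ∀ i : Fin n, E i.castSucc) (y : E (Fin.last n)), B v y = A (Fin.snoc v y))
    (hGT : IsGTSpace 𝕜 (E (Fin.last n) →L[𝕜] 𝕜))
    (hcot : HasCotype2 (E (Fin.last n) →L[𝕜] 𝕜))
    (hB : ∃ C > 0, ∀ (m : ℕ) (x : ∀ i : Fin n, Fin m → E i.castSucc),
      radNorm (fun j => B (fun i => x i j)) ≤ C * ∏ i, weakNorm 𝕜 2 (x i)) :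
    ∃ C > 0, ∀ (m : ℕ) (x : ∀ i, Fin m → E i),
      ∑ j, ‖A (fun i => x i j)‖ ≤ C * ∏ i, weakNorm 𝕜 2 (x i) := by
  obtain ⟨K, hK0, hK⟩ := exists_sum_norm_apply_le hGT hcot
  obtain ⟨C, hC0, hC⟩ := hB
  refine ⟨K * C, by positivity, fun m x => ?_⟩
  let y (j : Fin m) := B fun i => x i.castSucc j
  have hy (j : Fin m) : A (fun i => x i j) = y j (x (Fin.last n) j) := by
    rw [hAB]
    exact congrArg A (Fin.snoc_init_self fun i => x i j).symm
  have hlast := weakNorm_nonneg (𝕜 := 𝕜) 2 (x (Fin.last n))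
  calc ∑ j, ‖A (fun i => x i j)‖ = ∑ j, ‖y j (x (Fin.last n) j)‖ := by simp only [hy]
    _ ≤ K * radNorm y * weakNorm 𝕜 2 (x (Fin.last n)) := hK m y _
    _ ≤ K * (C * ∏ i : Fin n, weakNorm 𝕜 2 (x i.castSucc)) * weakNorm 𝕜 2 (x (Fin.last n)) := by
        gcongr
        exact hC m fun i => x i.castSucc
    _ = K * C * ∏ i, weakNorm 𝕜 2 (x i) := by
        rw [Fin.prod_univ_castSucc]
        ring

/-- If the dual of the last space is a GT-space of cotype 2 and the associated `n`-linear map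
`A_n` into that dual (characterized by `B v y = A (v, y)`) is almost summing, then the
`(n+1)`-linear form `A` is absolutely `(1; 2, …, 2)`-summing. -/
theorem almost_summing_implies_summing {𝕜 : Type*} [RCLike 𝕜] {n : ℕ} (hn : 1 ≤ n)
    (E : Fin (n + 1) → Type*) [∀ i, NormedAddCommGroup (E i)] [∀ i, NormedSpace 𝕜 (E i)]
    [∀ i, CompleteSpace (E i)]
    (A : ContinuousMultilinearMap 𝕜 E 𝕜)
    (B : ContinuousMultilinearMap 𝕜 (fun i : Fin n => E i.castSucc)
      (E (Fin.last n) →L[𝕜] 𝕜))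
    (hAB : ∀ (v : ∀ i : Fin n, E i.castSucc) (y : E (Fin.last n)), B v y = A (Fin.snoc v y))
    (hGT : IsGTSpace 𝕜 (E (Fin.last n) →L[𝕜] 𝕜))
    (hcot : HasCotype2 (E (Fin.last n) →L[𝕜] 𝕜))
    (hB : ∃ C > 0, ∀ (m : ℕ) (x : ∀ i : Fin n, Fin m → E i.castSucc),
      radNorm (fun j => B (fun i => x i j)) ≤ C * ∏ i, weakNorm 𝕜 2 (x i)) :
    ∃ C > 0, ∀ (m : ℕ) (x : ∀ i, Fin m → E i),
      ∑ j, ‖A (fun i => x i j)‖ ≤ C * ∏ i, weakNorm 𝕜 2 (x i) :=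
  almost_summing_implies_summing_general E A B hAB hGT hcot hB
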